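/- Let ψ : (0,+∞) → (0,+∞) be a function such that t ↦ ln ψ(e^t) is Lipschitz. If ∫₁^{+∞} ψ(t) dt = +∞, then Lebesgue-almost every y ∈ ℝ ∖ (ℚ ∪ PSL₂(ℤ)·φ) belongs to WA_ψ; if ∫₁^{+∞} ψ(t) dt < +∞, then WA_ψ has Lebesgue measure zero. -/

import Mathlib

open scoped Classical

/-- `α` is a real quadratic irrational: an irrational real number which is the root of a
quadratic polynomial with rational coefficients. -/
def IsQuadIrr (α : ℝ) : Prop :=
  Irrational α ∧ ∃ a b c : ℚ, a ≠ 0 ∧ (a : ℝ) * α ^ 2 + (b : ℝ) * α + (c : ℝ) = 0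

/-- `σ` is the Galois conjugate of the real quadratic irrational `α`: the other root of
its minimal (quadratic) polynomial over `ℚ`. -/
def IsGalConj (α σ : ℝ) : Prop :=
  Irrational α ∧ σ ≠ α ∧
    ∃ a b c : ℚ, a ≠ 0 ∧ (a : ℝ) * α ^ 2 + (b : ℝ) * α + (c : ℝ) = 0 ∧
      (a : ℝ) * σ ^ 2 + (b : ℝ) * σ + (c : ℝ) = 0

/-- The Galois conjugate `α^σ` of a real quadratic irrational `α` (junk value `0` if `α`
is not a real quadratic irrational). -/
noncomputable def galConj (α : ℝ) : ℝ :=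
  if h : ∃ σ, IsGalConj α σ then h.choose else 0

/-- The height `H(α) = 2/|α − α^σ|` of a real quadratic irrational `α`. -/
noncomputable def qiHeight (α : ℝ) : ℝ := 2 / |α - galConj α|

/-- The action of `SL₂(ℤ)` (inducing the action of `PSL₂(ℤ)`) on real numbers by
homographies: the matrix `(a b; c d)` sends `x` to `(a·x+b)/(c·x+d)`. -/
noncomputable def mob (A : Matrix.SpecialLinearGroup (Fin 2) ℤ) (x : ℝ) : ℝ :=
  ((A.1 0 0 : ℝ) * x + (A.1 0 1 : ℝ)) / ((A.1 1 0 : ℝ) * x + (A.1 1 1 : ℝ))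

/-- The orbit `PSL₂(ℤ)·α₀` of a real number under the homography action. -/
def mobOrbit (α₀ : ℝ) : Set ℝ := {α | ∃ A, mob A α₀ = α}

/-- The Golden Ratio `φ = (1+√5)/2`. -/
noncomputable def goldenRat : ℝ := (1 + Real.sqrt 5) / 2

/-- The approximation constant `c(y)` of `y` by the elements of `Z` (with the height
function `H = qiHeight`): the liminf of `H(α)·|y − α|` as `α` ranges over `Z` along the
Fréchet filter, i.e. the sup over finite subsets `F` of the inf over `α ∈ Z ∖ F` of
`H(α)·|y − α|`. -/
noncomputable def approxConst (Z : Set ℝ) (y : ℝ) : ℝ :=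
  ⨆ F : Finset ℝ, ⨅ α : {α : ℝ // α ∈ Z ∧ α ∉ F}, qiHeight α.1 * |y - α.1|

/-- The Lagrange spectrum for the approximation of the elements of
`ℝ ∖ (ℚ ∪ Z)` by the elements of `Z`. -/
noncomputable def lagrangeSpectrum (Z : Set ℝ) : Set ℝ :=
  approxConst Z '' {y : ℝ | Irrational y ∧ y ∉ Z}

/-- The set of `ψ`-well approximable real numbers by the elements of `Z` with height
function `H = qiHeight`: those `y ∈ ℝ ∖ (ℚ ∪ Z)` for which there exist infinitely many
`α ∈ Z` with `|y − α| ≤ ψ(H(α))`. -/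
def WAset (Z : Set ℝ) (ψ : ℝ → ℝ) : Set ℝ :=
  {y : ℝ | Irrational y ∧ y ∉ Z ∧ {α : ℝ | α ∈ Z ∧ |y - α| ≤ ψ (qiHeight α)}.Infinite}

/-!
The norm of a nonzero integral quadratic polynomial in a quadratic irrational `α` is bounded away
from `0`. Applied to the difference of two homographies at `α`, this shows that two distinct points
of the orbit of `α` of height at most `Q` are at distance `≫ 1 / Q`. Conversely every rational `r`
is at distance `≪ 1 / r.den ^ 2` from an orbit point of height `≪ r.den ^ 2`, so Dirichlet's theorem
gives `≫ (v - u) Q` orbit points of height at most `Q` in `[u, v]`. Khintchine's theorem holds for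
every set of points with these two properties, cut into blocks of height about `2 ^ k`, on which
`ψ` is essentially constant. The convergence half is the Borel–Cantelli lemma. For the divergence
half, the separation makes the neighbourhoods of the blocks quasi-independent, so by the
Chung–Erdős inequality their limsup fills a fixed proportion of every interval, and it has full
measure by Lebesgue's density theorem.
-/

open Set Filter MeasureTheory Metric

/-! ### Galois conjugates -/

lemma eq_zero_and_eq_zero_of_irrational {x : ℝ} (hx : Irrational x) {u v : ℚ}
    (h : u * x + v = 0) : u = 0 ∧ v = 0 := by
  have hu : u = 0 := by
    by_contra hu
    have hirr : Irrational (u * x + v) :=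
      irrational_add_ratCast_iff.mpr (irrational_ratCast_mul_iff.mpr ⟨hu, hx⟩)
    exact hirr.ne_zero h
  refine ⟨hu, ?_⟩
  simpa [hu] using h

lemma isGalConj_iff_exists_trace_norm {α σ : ℝ} :
    IsGalConj α σ ↔ Irrational α ∧ σ ≠ α ∧ ∃ s t : ℚ, α + σ = s ∧ α * σ = t := by
  refine and_congr_right fun _ ↦ and_congr_right fun hne ↦ ⟨?_, ?_⟩
  · rintro ⟨a, b, c, ha, hα, hσ⟩
    have ha' : (a : ℝ) ≠ 0 := Rat.cast_ne_zero.mpr ha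
    have htrace : a * (α + σ) = -b :=
      mul_left_cancel₀ (sub_ne_zero.mpr hne) (by linear_combination hσ - hα)
    refine ⟨-b / a, c / a, ?_, ?_⟩ <;> push_cast <;> rw [eq_div_iff ha']
    · linear_combination htrace
    · linear_combination α * htrace - hα
  · rintro ⟨s, t, hs, ht⟩
    refine ⟨1, -s, t, one_ne_zero, ?_, ?_⟩ <;> push_cast
    · linear_combination α * hs - ht
    · linear_combination σ * hs - ht

lemma IsQuadIrr.exists_isGalConj {α : ℝ} (hα : IsQuadIrr α) : ∃ σ, IsGalConj α σ := by
  obtain ⟨hirr, a, b, c, ha, hroot⟩ := hα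
  refine ⟨-b / a - α, isGalConj_iff_exists_trace_norm.mpr
    ⟨hirr, fun h ↦ hirr ⟨-b / (2 * a), ?_⟩, -b / a, c / a, ?_, ?_⟩⟩
  · push_cast
    field_simp at h ⊢
    linear_combination h
  · push_cast
    ring
  · push_cast
    field_simp
    linear_combination -hroot

namespace IsGalConj

variable {α σ : ℝ}

lemma root (h : IsGalConj α σ) {a b c : ℚ} (hα : a * α ^ 2 + b * α + c = 0) :
    a * σ ^ 2 + b * σ + c = 0 := by
  obtain ⟨hirr, -, s, t, hs, ht⟩ := isGalConj_iff_exists_trace_norm.mp h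
  obtain ⟨hb, hc⟩ := eq_zero_and_eq_zero_of_irrational (u := a * s + b) (v := c - a * t) hirr (by
    push_cast
    rw [← hs, ← ht]
    linear_combination hα)
  have hb' : a * (s : ℝ) + b = 0 := by exact_mod_cast hb
  have hc' : c - a * (t : ℝ) = 0 := by exact_mod_cast hc
  linear_combination σ * hb' + hc' + a * σ * hs - a * ht

lemma symm (h : IsGalConj α σ) : IsGalConj σ α := by
  obtain ⟨hirr, hne, s, t, hs, ht⟩ := isGalConj_iff_exists_trace_norm.mp h
  refine isGalConj_iff_exists_trace_norm.mpr
    ⟨?_, hne.symm, s, t, by rw [add_comm, hs], by rw [mul_comm, ht]⟩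
  rw [eq_sub_of_add_eq' hs]
  exact irrational_ratCast_sub_iff.mpr hirr

lemma galConj_eq (h : IsGalConj α σ) : galConj α = σ := by
  have hex : ∃ τ, IsGalConj α τ := ⟨σ, h⟩
  rw [galConj, dif_pos hex]
  have hτ : IsGalConj α hex.choose := hex.choose_spec
  set τ := hex.choose
  obtain ⟨-, -, s, t, hs, ht⟩ := isGalConj_iff_exists_trace_norm.mp h
  have hroot : ((1 : ℚ) : ℝ) * τ ^ 2 + ((-s : ℚ) : ℝ) * τ + (t : ℝ) = 0 :=
    hτ.root (by push_cast; linear_combination α * hs - ht)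
  push_cast at hroot
  refine mul_left_cancel₀ (sub_ne_zero.mpr hτ.2.1) ?_
  linear_combination hroot + ht - τ * hs

lemma qiHeight_eq (h : IsGalConj α σ) : qiHeight α = 2 / |α - σ| := by
  rw [qiHeight, h.galConj_eq]

lemma abs_sub_pos (h : IsGalConj α σ) : 0 < |α - σ| :=
  abs_pos.mpr (sub_ne_zero.mpr h.2.1.symm)

lemma qiHeight_pos (h : IsGalConj α σ) : 0 < qiHeight α := by
  rw [h.qiHeight_eq]
  exact div_pos two_pos h.abs_sub_pos

-- If `A` clears the denominators of the trace and of the norm of `α`, then `A ^ 2` times the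
-- product below is a nonzero integer.
lemma exists_le_abs_norm (h : IsGalConj α σ) : ∃ ε : ℝ, 0 < ε ∧ ∀ p q r : ℤ,
    p * α ^ 2 + q * α + r ≠ 0 → ε ≤ |(p * α ^ 2 + q * α + r) * (p * σ ^ 2 + q * σ + r)| := by
  obtain ⟨-, -, s, t, hs, ht⟩ := isGalConj_iff_exists_trace_norm.mp h
  obtain ⟨A, S, T, hA, hS, hT⟩ :
      ∃ A S T : ℤ, A ≠ 0 ∧ A * (α + σ) = S ∧ A * (α * σ) = T := by
    refine ⟨s.den * t.den, s.num * t.den, t.num * s.den, by simp, ?_, ?_⟩ <;> push_cast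
    · rw [hs, ← Rat.cast_natCast s.den, mul_right_comm, ← Rat.cast_mul, Rat.den_mul_eq_num]
      simp
    · rw [ht, ← Rat.cast_natCast t.den, mul_assoc, ← Rat.cast_mul, Rat.den_mul_eq_num, mul_comm]
      simp
  have hA' : (0 : ℝ) < (A : ℝ) ^ 2 := by positivity
  refine ⟨1 / (A : ℝ) ^ 2, by positivity, fun p q r hne ↦ ?_⟩
  have hne' : p * σ ^ 2 + q * σ + r ≠ 0 := fun h0 ↦ hne (by
    exact_mod_cast h.symm.root (a := p) (b := q) (c := r) (by exact_mod_cast h0))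
  set n : ℤ := p ^ 2 * T ^ 2 + p * q * T * S + p * r * (S ^ 2 - 2 * A * T) + q ^ 2 * A * T +
    q * r * A * S + A ^ 2 * r ^ 2
  have hn : (n : ℝ) = A ^ 2 * ((p * α ^ 2 + q * α + r) * (p * σ ^ 2 + q * σ + r)) := by
    simp only [n]
    push_cast
    rw [← hS, ← hT]
    ring
  have hn0 : n ≠ 0 := by
    rw [← Int.cast_ne_zero (α := ℝ), hn]
    exact mul_ne_zero hA'.ne' (mul_ne_zero hne hne')
  rw [div_le_iff₀' hA', ← abs_of_pos hA', ← abs_mul, ← hn]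
  exact_mod_cast Int.one_le_abs hn0

end IsGalConj

/-! ### Orbits of quadratic irrationals -/

/-- The automorphy factor `c x + d` of the homography `mob (a b; c d)` at `x`. -/
noncomputable def mobDenom (A : Matrix.SpecialLinearGroup (Fin 2) ℤ) (x : ℝ) : ℝ :=
  A.1 1 0 * x + A.1 1 1

lemma mob_mul_mobDenom {A : Matrix.SpecialLinearGroup (Fin 2) ℤ} {x : ℝ}
    (hx : mobDenom A x ≠ 0) : mob A x * mobDenom A x = A.1 0 0 * x + A.1 0 1 :=
  div_mul_cancel₀ _ hx

lemma det_fin_two_cast_eq_one (A : Matrix.SpecialLinearGroup (Fin 2) ℤ) :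
    (A.1 0 0 : ℝ) * A.1 1 1 - A.1 0 1 * A.1 1 0 = 1 := by
  have hdet := A.2
  rw [Matrix.det_fin_two] at hdet
  exact_mod_cast hdet

lemma mobDenom_ne_zero (A : Matrix.SpecialLinearGroup (Fin 2) ℤ) {x : ℝ} (hx : Irrational x) :
    mobDenom A x ≠ 0 := by
  intro h
  obtain ⟨hc, hd⟩ := eq_zero_and_eq_zero_of_irrational (u := A.1 1 0) (v := A.1 1 1) hx
    (by exact_mod_cast h)
  have hdet := det_fin_two_cast_eq_one A
  simp_all

lemma irrational_mob (A : Matrix.SpecialLinearGroup (Fin 2) ℤ) {x : ℝ} (hx : Irrational x) :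
    Irrational (mob A x) := by
  rintro ⟨q, hq⟩
  have hmul := mob_mul_mobDenom (mobDenom_ne_zero A hx)
  rw [← hq, mobDenom] at hmul
  obtain ⟨ha, hb⟩ := eq_zero_and_eq_zero_of_irrational
    (u := A.1 0 0 - q * A.1 1 0) (v := A.1 0 1 - q * A.1 1 1) hx
    (by push_cast; linear_combination -hmul)
  have ha' : (A.1 0 0 : ℝ) - q * A.1 1 0 = 0 := by exact_mod_cast ha
  have hb' : (A.1 0 1 : ℝ) - q * A.1 1 1 = 0 := by exact_mod_cast hb
  have hdet := det_fin_two_cast_eq_one A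
  exact zero_ne_one (α := ℝ) (by linear_combination A.1 1 0 * hb' - A.1 1 1 * ha' + hdet)

lemma mob_sub_mob {A : Matrix.SpecialLinearGroup (Fin 2) ℤ} {x y : ℝ} (hx : mobDenom A x ≠ 0)
    (hy : mobDenom A y ≠ 0) : mob A x - mob A y = (x - y) / (mobDenom A x * mobDenom A y) := by
  rw [eq_div_iff (mul_ne_zero hx hy)]
  have h1 := mob_mul_mobDenom hx
  have h2 := mob_mul_mobDenom hy
  have hdet := det_fin_two_cast_eq_one A
  calc (mob A x - mob A y) * (mobDenom A x * mobDenom A y)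
      = (mob A x * mobDenom A x) * mobDenom A y - (mob A y * mobDenom A y) * mobDenom A x := by
        ring
    _ = x - y := by
        rw [h1, h2, mobDenom, mobDenom]
        linear_combination (x - y) * hdet

namespace IsGalConj

variable {α σ : ℝ}

lemma map_mob (h : IsGalConj α σ) (A : Matrix.SpecialLinearGroup (Fin 2) ℤ) :
    IsGalConj (mob A α) (mob A σ) := by
  have hα := mobDenom_ne_zero A h.1
  have hσ := mobDenom_ne_zero A h.symm.1
  obtain ⟨-, hne, s, t, hs, ht⟩ := isGalConj_iff_exists_trace_norm.mp h
  have hnorm : mobDenom A α * mobDenom A σ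
      = A.1 1 0 ^ 2 * t + A.1 1 0 * A.1 1 1 * s + A.1 1 1 ^ 2 := by
    rw [mobDenom, mobDenom, ← hs, ← ht]
    ring
  refine isGalConj_iff_exists_trace_norm.mpr ⟨irrational_mob A h.1, ?_,
    (2 * A.1 0 0 * A.1 1 0 * t + (A.1 0 0 * A.1 1 1 + A.1 0 1 * A.1 1 0) * s
      + 2 * A.1 0 1 * A.1 1 1) / (A.1 1 0 ^ 2 * t + A.1 1 0 * A.1 1 1 * s + A.1 1 1 ^ 2),
    (A.1 0 0 ^ 2 * t + A.1 0 0 * A.1 0 1 * s + A.1 0 1 ^ 2)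
      / (A.1 1 0 ^ 2 * t + A.1 1 0 * A.1 1 1 * s + A.1 1 1 ^ 2), ?_, ?_⟩
  · rw [← sub_ne_zero, mob_sub_mob hσ hα]
    exact div_ne_zero (sub_ne_zero.mpr hne) (mul_ne_zero hσ hα)
  · push_cast
    rw [← hnorm, eq_div_iff (mul_ne_zero hα hσ), add_mul, ← mul_assoc, mob_mul_mobDenom hα,
      mul_comm (mobDenom A α), ← mul_assoc, mob_mul_mobDenom hσ, mobDenom, mobDenom, ← hs, ← ht]
    ring
  · push_cast
    rw [← hnorm, eq_div_iff (mul_ne_zero hα hσ), mul_mul_mul_comm, mob_mul_mobDenom hα,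
      mob_mul_mobDenom hσ, ← hs, ← ht]
    ring

lemma qiHeight_mob (h : IsGalConj α σ) (A : Matrix.SpecialLinearGroup (Fin 2) ℤ) :
    qiHeight (mob A α) = qiHeight α * |mobDenom A α * mobDenom A σ| := by
  have hσ := h.symm.1
  rw [(h.map_mob A).qiHeight_eq, h.qiHeight_eq, mob_sub_mob (mobDenom_ne_zero A h.1)
    (mobDenom_ne_zero A hσ), abs_div, div_div_eq_mul_div, mul_div_right_comm]

lemma exists_pos_le_qiHeight_mob (h : IsGalConj α σ) : ∃ ε : ℝ, 0 < ε ∧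
    ∀ A : Matrix.SpecialLinearGroup (Fin 2) ℤ, ε ≤ qiHeight (mob A α) := by
  obtain ⟨ε, hε, hle⟩ := h.exists_le_abs_norm
  refine ⟨qiHeight α * ε, mul_pos h.qiHeight_pos hε, fun A ↦ ?_⟩
  rw [h.qiHeight_mob]
  refine mul_le_mul_of_nonneg_left ?_ h.qiHeight_pos.le
  simpa [mobDenom] using hle 0 (A.1 1 0) (A.1 1 1)
    (by simpa [mobDenom] using mobDenom_ne_zero A h.1)

lemma exists_pos_le_abs_sub_mul_abs_sub_conj (h : IsGalConj α σ) : ∃ κ : ℝ, 0 < κ ∧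
    ∀ A B : Matrix.SpecialLinearGroup (Fin 2) ℤ, mob A α ≠ mob B α →
      κ ≤ |mob A α - mob B α| * |mob A σ - mob B σ| *
        (qiHeight (mob A α) * qiHeight (mob B α)) := by
  obtain ⟨ε, hε, hle⟩ := h.exists_le_abs_norm
  have hσ := h.symm.1
  refine ⟨ε * qiHeight α ^ 2, mul_pos hε (pow_pos h.qiHeight_pos 2), fun A B hne ↦ ?_⟩
  -- Clearing denominators, `mob A x - mob B x` becomes an integral quadratic polynomial in `x`.
  have hpoly : ∀ x, Irrational x →
      ((A.1 0 0 * B.1 1 0 - B.1 0 0 * A.1 1 0 : ℤ) : ℝ) * x ^ 2 +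
        ((A.1 0 0 * B.1 1 1 + A.1 0 1 * B.1 1 0 - B.1 0 0 * A.1 1 1
          - B.1 0 1 * A.1 1 0 : ℤ) : ℝ) * x
        + ((A.1 0 1 * B.1 1 1 - B.1 0 1 * A.1 1 1 : ℤ) : ℝ)
      = (mob A x - mob B x) * (mobDenom A x * mobDenom B x) := by
    intro x hx
    have hA := mob_mul_mobDenom (mobDenom_ne_zero A hx)
    have hB := mob_mul_mobDenom (mobDenom_ne_zero B hx)
    calc _ = (A.1 0 0 * x + A.1 0 1) * mobDenom B x - (B.1 0 0 * x + B.1 0 1) * mobDenom A x := by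
          rw [mobDenom, mobDenom]
          push_cast
          ring
      _ = _ := by
          rw [← hA, ← hB]
          ring
  have hbound := hle _ _ _ (by
    rw [hpoly α h.1]
    exact mul_ne_zero (sub_ne_zero.mpr hne)
      (mul_ne_zero (mobDenom_ne_zero A h.1) (mobDenom_ne_zero B h.1)))
  rw [hpoly α h.1, hpoly σ hσ] at hbound
  calc ε * qiHeight α ^ 2 ≤ _ := mul_le_mul_of_nonneg_right hbound (sq_nonneg _)
    _ = _ := by
      rw [h.qiHeight_mob, h.qiHeight_mob]
      simp only [abs_mul]
      ring

end IsGalConj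

lemma exists_specialLinearGroup_col_eq_rat (r : ℚ) (k : ℤ) :
    ∃ A : Matrix.SpecialLinearGroup (Fin 2) ℤ, A.1 0 0 = r.num ∧ A.1 1 0 = r.den ∧
      k * r.den ≤ A.1 1 1 ∧ A.1 1 1 ≤ (k + 1) * r.den := by
  have hden : (0 : ℤ) < r.den := by exact_mod_cast r.den_pos
  obtain ⟨u, v, huv⟩ := Rat.isCoprime_num_den r
  set j : ℤ := k - u / r.den
  have hd : u + j * r.den = k * r.den + u % r.den := by
    linear_combination (Int.emod_add_mul_ediv u r.den).symm
  refine ⟨⟨!![r.num, -v + j * r.num; r.den, u + j * r.den], ?_⟩, by simp, by simp, ?_, ?_⟩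
  · rw [Matrix.det_fin_two_of]
    linear_combination huv
  · simp only [Matrix.of_apply, Matrix.cons_val]
    rw [hd]
    linarith [Int.emod_nonneg u hden.ne']
  · simp only [Matrix.of_apply, Matrix.cons_val]
    rw [hd]
    linarith [Int.emod_lt_of_pos u hden]

-- The matrix is chosen with `c = r.den` and `d / c` so large that `cα + d` and `cσ + d` are both
-- comparable to `c`.
lemma IsGalConj.exists_mem_mobOrbit_near_rat {α σ : ℝ} (h : IsGalConj α σ) : ∃ K : ℝ, 0 < K ∧
    ∀ r : ℚ, ∃ β ∈ mobOrbit α, qiHeight β ≤ K * r.den ^ 2 ∧ |r - β| ≤ K / r.den ^ 2 := by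
  obtain ⟨k, hk⟩ := exists_nat_ge (|α| + |σ| + 1)
  have hH := h.qiHeight_pos
  refine ⟨1 + qiHeight α * (2 * k) ^ 2, by positivity, fun r ↦ ?_⟩
  obtain ⟨A, ha, hc, hd, hd'⟩ := exists_specialLinearGroup_col_eq_rat r k
  have hden : (0 : ℝ) < r.den := by exact_mod_cast r.den_pos
  have hd : (k : ℝ) * r.den ≤ A.1 1 1 := by exact_mod_cast hd
  have hd' : (A.1 1 1 : ℝ) ≤ (k + 1) * r.den := by exact_mod_cast hd'
  have hbounds : ∀ x : ℝ, |x| + 1 ≤ k → mobDenom A x ∈ Icc (r.den : ℝ) (2 * k * r.den) := by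
    intro x hx
    rw [mobDenom, hc, Int.cast_natCast]
    constructor <;> nlinarith [abs_le.mp (le_refl |x|)]
  obtain ⟨hα, hα'⟩ := hbounds α (by linarith [abs_nonneg σ])
  obtain ⟨hσ, hσ'⟩ := hbounds σ (by linarith [abs_nonneg α])
  refine ⟨mob A α, ⟨A, rfl⟩, ?_, ?_⟩
  · rw [h.qiHeight_mob, abs_of_pos (mul_pos (hden.trans_le hα) (hden.trans_le hσ))]
    calc qiHeight α * (mobDenom A α * mobDenom A σ)
        ≤ qiHeight α * ((2 * k * r.den) * (2 * k * r.den)) := by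
          gcongr
          exact hden.le.trans hσ
      _ ≤ (1 + qiHeight α * (2 * k) ^ 2) * r.den ^ 2 := by nlinarith [sq_nonneg (r.den : ℝ)]
  · have hα0 : 0 < mobDenom A α := hden.trans_le hα
    have hsub : r - mob A α = 1 / (r.den * mobDenom A α) := by
      have hdet := det_fin_two_cast_eq_one A
      have hmul := mob_mul_mobDenom hα0.ne'
      have hr : (r : ℝ) * r.den = r.num := by exact_mod_cast Rat.mul_den_eq_num r
      rw [eq_div_iff (by positivity)]
      simp only [mobDenom, ha, hc, Int.cast_natCast] at hmul hdet ⊢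
      linear_combination hdet + hr * (r.den * α + A.1 1 1) - r.den * hmul
    rw [hsub, abs_of_pos (by positivity)]
    calc 1 / (r.den * mobDenom A α) ≤ 1 / (r.den : ℝ) ^ 2 := by
          rw [sq]
          gcongr
      _ ≤ (1 + qiHeight α * (2 * k) ^ 2) / r.den ^ 2 := by
          gcongr
          exact le_add_of_nonneg_right (by positivity)

lemma isQuadIrr_goldenRat : IsQuadIrr goldenRat := by
  refine ⟨Real.goldenRatio_irrational, 1, -1, -1, one_ne_zero, ?_⟩
  have hsq : goldenRat ^ 2 = goldenRat + 1 := Real.goldenRatio_sq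
  push_cast
  linear_combination hsq

/-! ### Thickenings of separated sets of reals -/

section Separated

variable {S S' : Set ℝ} {u v ε ε' ρ ρ' : ℝ}

lemma finite_and_ncard_le_of_pairwise_le_dist (hε : 0 < ε) (huv : u ≤ v) (hS : S ⊆ Icc u v)
    (hsep : S.Pairwise fun s t ↦ ε ≤ dist s t) : S.Finite ∧ (S.ncard : ℝ) ≤ (v - u) / ε + 1 := by
  have hnonneg : ∀ s ∈ S, 0 ≤ (s - u) / ε := fun s hs ↦
    div_nonneg (sub_nonneg.mpr (hS hs).1) hε.le
  have hmaps : MapsTo (fun s : ℝ ↦ ⌊(s - u) / ε⌋₊) S (Finset.range (⌊(v - u) / ε⌋₊ + 1)) := by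
    intro s hs
    rw [Finset.coe_range, mem_Iio, Nat.lt_succ_iff]
    refine Nat.floor_le_floor ?_
    gcongr
    exact (hS hs).2
  have hinj : InjOn (fun s : ℝ ↦ ⌊(s - u) / ε⌋₊) S := by
    intro s hs t ht hst
    by_contra hne
    have hlt : |(s - u) / ε - (t - u) / ε| < 1 := by
      have hst : ⌊(s - u) / ε⌋₊ = ⌊(t - u) / ε⌋₊ := hst
      have hs' := Nat.floor_le (hnonneg s hs)
      have hs'' := Nat.lt_floor_add_one ((s - u) / ε)
      rw [hst] at hs' hs''
      rw [abs_sub_lt_iff]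
      constructor <;>
        linarith [Nat.floor_le (hnonneg t ht), Nat.lt_floor_add_one ((t - u) / ε)]
    rw [← sub_div, sub_sub_sub_cancel_right, abs_div, abs_of_pos hε, div_lt_one hε,
      ← Real.dist_eq] at hlt
    exact (hsep hs ht hne).not_gt hlt
  refine ⟨(Finset.finite_toSet _).of_injOn hmaps hinj, ?_⟩
  have hcard := ncard_le_ncard_of_injOn _ hmaps hinj (Finset.finite_toSet _)
  rw [ncard_coe_finset, Finset.card_range] at hcard
  calc (S.ncard : ℝ) ≤ ⌊(v - u) / ε⌋₊ + 1 := by exact_mod_cast hcard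
    _ ≤ (v - u) / ε + 1 := by
      gcongr
      exact Nat.floor_le (div_nonneg (sub_nonneg.mpr huv) hε.le)

lemma thickening_eq_biUnion_toFinset {X : Type*} [PseudoMetricSpace X] {S : Set X}
    (hS : S.Finite) :
    thickening ρ S = ⋃ s ∈ hS.toFinset, ball s ρ := by
  simp [thickening_eq_biUnion_ball]

lemma volume_real_thickening_le (hS : S.Finite) (hρ : 0 ≤ ρ) :
    volume.real (thickening ρ S) ≤ S.ncard * (2 * ρ) := by
  rw [thickening_eq_biUnion_toFinset hS, ncard_eq_toFinset_card S hS]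
  refine (measureReal_biUnion_finset_le _ _).trans_eq ?_
  simp [Real.volume_real_ball hρ]

lemma volume_real_thickening_eq (hS : S.Finite) (hsep : S.Pairwise fun s t ↦ ε ≤ dist s t)
    (hρ : 0 ≤ ρ) (hρε : 2 * ρ ≤ ε) : volume.real (thickening ρ S) = S.ncard * (2 * ρ) := by
  rw [thickening_eq_biUnion_toFinset hS, ncard_eq_toFinset_card S hS,
    measureReal_biUnion_finset _ fun _ _ ↦ measurableSet_ball]
  · simp [Real.volume_real_ball hρ]
  · intro s hs t ht hst
    exact ball_disjoint_ball (by
      linarith [hsep (hS.mem_toFinset.mp hs) (hS.mem_toFinset.mp ht) hst])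

lemma volume_real_thickening_inter_Icc_le (hε : 0 < ε) (hsep : S.Pairwise fun s t ↦ ε ≤ dist s t)
    (hρ : 0 ≤ ρ) (huv : u ≤ v) :
    volume.real (thickening ρ S ∩ Icc u v) ≤ ((v - u + 2 * ρ) / ε + 1) * (2 * ρ) := by
  obtain ⟨hfin, hcard⟩ := finite_and_ncard_le_of_pairwise_le_dist
    (S := S ∩ Icc (u - ρ) (v + ρ)) hε (by linarith) inter_subset_right
    (hsep.mono inter_subset_left)
  have hsub : thickening ρ S ∩ Icc u v ⊆ thickening ρ (S ∩ Icc (u - ρ) (v + ρ)) := by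
    rintro y ⟨hy, hyu, hyv⟩
    obtain ⟨s, hs, hys⟩ := mem_thickening_iff.mp hy
    have hlt := abs_sub_lt_iff.mp (Real.dist_eq y s ▸ hys)
    exact mem_thickening_iff.mpr ⟨s, ⟨hs, by linarith, by linarith⟩, hys⟩
  have hfinite : volume (thickening ρ (S ∩ Icc (u - ρ) (v + ρ))) ≠ ⊤ :=
    hfin.isBounded.thickening.measure_lt_top.ne
  calc volume.real (thickening ρ S ∩ Icc u v)
      ≤ volume.real (thickening ρ (S ∩ Icc (u - ρ) (v + ρ))) := measureReal_mono hsub hfinite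
    _ ≤ (S ∩ Icc (u - ρ) (v + ρ)).ncard * (2 * ρ) := volume_real_thickening_le hfin hρ
    _ ≤ ((v + ρ - (u - ρ)) / ε + 1) * (2 * ρ) := by gcongr
    _ = _ := by ring

lemma volume_real_thickening_inter_thickening_le (hS : S.Finite) (hε' : 0 < ε')
    (hsep : S'.Pairwise fun s t ↦ ε' ≤ dist s t) (hρ : 0 ≤ ρ) (hρ' : 0 ≤ ρ') :
    volume.real (thickening ρ S ∩ thickening ρ' S') ≤
      S.ncard * (((2 * ρ + 2 * ρ') / ε' + 1) * (2 * ρ')) := by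
  rw [thickening_eq_biUnion_toFinset hS, iUnion₂_inter, ncard_eq_toFinset_card S hS,
    ← nsmul_eq_mul]
  refine (measureReal_biUnion_finset_le _ _).trans (Finset.sum_le_card_nsmul _ _ _ fun s _ ↦ ?_)
  have hsub : ball s ρ ∩ thickening ρ' S' ⊆ thickening ρ' S' ∩ Icc (s - ρ) (s + ρ) := by
    rw [inter_comm, ← Real.closedBall_eq_Icc]
    exact inter_subset_inter_right _ ball_subset_closedBall
  calc volume.real (ball s ρ ∩ thickening ρ' S')
      ≤ volume.real (thickening ρ' S' ∩ Icc (s - ρ) (s + ρ)) :=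
        measureReal_mono hsub (measure_inter_lt_top_of_right_ne_top measure_Icc_lt_top.ne).ne
    _ ≤ ((s + ρ - (s - ρ) + 2 * ρ') / ε' + 1) * (2 * ρ') :=
        volume_real_thickening_inter_Icc_le hε' hsep hρ' (by linarith)
    _ = _ := by ring

end Separated

/-! ### Sets of reals with a height -/

/-- The block of points of `Z` whose height `H` lies in `[a, b]`; blocks with `a` and `b`
proportional to `2 ^ k` decompose `Z`. -/
def heightBlock (Z : Set ℝ) (H : ℝ → ℝ) (a b : ℝ) : Set ℝ := {α ∈ Z | H α ∈ Icc a b}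

/-- Distinct points of `Z` of height at most `Q` are at distance at least `δ / Q`, for some
constant `δ > 0`. -/
def HeightSeparated (Z : Set ℝ) (H : ℝ → ℝ) : Prop :=
  ∃ δ > 0, Z.Pairwise fun α β ↦ δ ≤ max (H α) (H β) * dist α β

/-- Every compact interval contains at least `c Q` times its length points of `Z` of height at
most `Q`, for `Q` large. Together with `HeightSeparated`, this says that `(Z, H)` is a regular
system in the sense of Baker and Schmidt. The junk value `ncard = 0` on infinite sets makes the
condition include the finiteness of these sets of points. -/
def HeightDense (Z : Set ℝ) (H : ℝ → ℝ) : Prop :=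
  ∃ c > 0, ∀ u v, u < v → ∀ᶠ Q : ℝ in atTop,
    c * (v - u) * Q ≤ ({α ∈ Z | H α ≤ Q} ∩ Icc u v).ncard

section Height

variable {Z : Set ℝ} {H : ℝ → ℝ}

lemma pairwise_le_dist_of_height_le {δ Q : ℝ} (hQ : 0 < Q)
    (hδ : Z.Pairwise fun α β ↦ δ ≤ max (H α) (H β) * dist α β) :
    {α ∈ Z | H α ≤ Q}.Pairwise fun α β ↦ δ / Q ≤ dist α β := by
  rintro α ⟨hα, hαQ⟩ β ⟨hβ, hβQ⟩ hne
  rw [div_le_iff₀' hQ]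
  exact (hδ hα hβ hne).trans (mul_le_mul_of_nonneg_right (max_le hαQ hβQ) dist_nonneg)

lemma HeightSeparated.finite_inter_Icc (hsep : HeightSeparated Z H) (Q u v : ℝ) :
    ({α ∈ Z | H α ≤ Q} ∩ Icc u v).Finite := by
  obtain ⟨δ, hδ, hsep⟩ := hsep
  rcases lt_or_ge v u with huv | huv
  · simp [Icc_eq_empty huv.not_ge]
  have hQ : 0 < max Q 1 := lt_max_of_lt_right one_pos
  refine ((finite_and_ncard_le_of_pairwise_le_dist (div_pos hδ hQ) huv inter_subset_right
    ((pairwise_le_dist_of_height_le hQ hsep).mono inter_subset_left)).1).subset ?_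
  exact inter_subset_inter_left _ fun α hα ↦ ⟨hα.1, hα.2.trans (le_max_left _ _)⟩

lemma HeightDense.exists_le_ncard_heightBlock (hdense : HeightDense Z H)
    (hsep : HeightSeparated Z H) : ∃ c > 0, ∃ m > 0, ∀ u v, u < v → ∀ᶠ Q : ℝ in atTop,
      c * (v - u) * Q ≤ (heightBlock Z H (m * Q) Q ∩ Icc u v).ncard := by
  obtain ⟨c, hc, hdense⟩ := hdense
  have hfinite := hsep.finite_inter_Icc
  obtain ⟨δ, hδ, hsep⟩ := hsep
  set m := c * δ / 4
  have hm : 0 < m := by positivity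
  refine ⟨c / 2, by positivity, m, hm, fun u v huv ↦ ?_⟩
  filter_upwards [hdense u v huv, eventually_ge_atTop (4 / (c * (v - u)))] with Q hQ hQ'
  have hQ0 : 0 < Q := (by positivity : 0 < 4 / (c * (v - u))).trans_le hQ'
  have hlow := (finite_and_ncard_le_of_pairwise_le_dist (S := {α ∈ Z | H α ≤ m * Q} ∩ Icc u v)
    (by positivity) huv.le inter_subset_right
    ((pairwise_le_dist_of_height_le (mul_pos hm hQ0) hsep).mono inter_subset_left)).2
  have hcover : {α ∈ Z | H α ≤ Q} ∩ Icc u v ⊆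
      ({α ∈ Z | H α ≤ m * Q} ∩ Icc u v) ∪ (heightBlock Z H (m * Q) Q ∩ Icc u v) := by
    rintro α ⟨⟨hα, hαQ⟩, hαuv⟩
    rcases le_total (H α) (m * Q) with hle | hle
    exacts [.inl ⟨⟨hα, hle⟩, hαuv⟩, .inr ⟨⟨hα, hle, hαQ⟩, hαuv⟩]
  have hcard : (({α ∈ Z | H α ≤ Q} ∩ Icc u v).ncard : ℝ) ≤
      ({α ∈ Z | H α ≤ m * Q} ∩ Icc u v).ncard + (heightBlock Z H (m * Q) Q ∩ Icc u v).ncard := by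
    have hblock : (heightBlock Z H (m * Q) Q ∩ Icc u v).Finite :=
      (hfinite Q u v).subset (inter_subset_inter_left _ fun α hα ↦ ⟨hα.1, hα.2.2⟩)
    exact_mod_cast (ncard_le_ncard hcover ((hfinite _ u v).union hblock)).trans
      (ncard_union_le _ _)
  have hlow' : (v - u) / (δ / (m * Q)) + 1 ≤ c / 2 * (v - u) * Q := by
    have h1 : 1 ≤ c / 4 * (v - u) * Q := by
      rw [div_le_iff₀ (by positivity)] at hQ'
      linarith
    have h2 : (v - u) / (δ / (m * Q)) = c / 4 * (v - u) * Q := by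
      simp only [m]
      field_simp
    linarith
  linarith

end Height

/-! ### Density of heights from approximation of the rationals -/

lemma tendsto_harmonic_div_atTop : Tendsto (fun n : ℕ ↦ (harmonic n : ℝ) / n) atTop (nhds 0) := by
  refine (tendsto_one_div_add_atTop_nhds_zero_nat (𝕜 := ℝ)).cesaro.congr fun n ↦ ?_
  simp [harmonic, div_eq_inv_mul]

lemma volume_real_near_rat_le {u v ε : ℝ} (huv : u ≤ v) (hε : 0 ≤ ε) (hε' : ε ≤ 1) (n : ℕ) :
    volume.real ((⋃ q ∈ Finset.Icc 1 n, thickening (ε / q) (range fun p : ℤ ↦ (p : ℝ) / q))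
      ∩ Icc u v) ≤ 2 * ε * (v - u) * n + 6 * ε * harmonic n := by
  have hq : ∀ q ∈ Finset.Icc 1 n,
      volume.real (thickening (ε / q) (range fun p : ℤ ↦ (p : ℝ) / q) ∩ Icc u v) ≤
        2 * ε * (v - u) + 6 * ε * (q : ℝ)⁻¹ := by
    intro q hq
    have hq0 : (0 : ℝ) < q := by exact_mod_cast (Finset.mem_Icc.mp hq).1
    have hsep : (range fun p : ℤ ↦ (p : ℝ) / q).Pairwise fun s t ↦ 1 / q ≤ dist s t := by
      rintro _ ⟨p, rfl⟩ _ ⟨p', rfl⟩ hne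
      have hpp' : p - p' ≠ 0 := fun h ↦ hne (by simp [sub_eq_zero.mp h])
      rw [Real.dist_eq, ← sub_div, abs_div, abs_of_pos hq0]
      gcongr
      exact_mod_cast Int.one_le_abs hpp'
    calc _ ≤ ((v - u + 2 * (ε / q)) / (1 / q) + 1) * (2 * (ε / q)) :=
          volume_real_thickening_inter_Icc_le (by positivity) hsep (by positivity) huv
      _ = 2 * ε * (v - u) + (4 * ε + 2) * ε * (q : ℝ)⁻¹ := by
          field_simp
          ring
      _ ≤ 2 * ε * (v - u) + 6 * ε * (q : ℝ)⁻¹ := by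
          gcongr
          linarith
  rw [iUnion₂_inter]
  calc _ ≤ ∑ q ∈ Finset.Icc 1 n, (2 * ε * (v - u) + 6 * ε * (q : ℝ)⁻¹) :=
        (measureReal_biUnion_finset_le _ _).trans (Finset.sum_le_sum hq)
    _ = _ := by
        rw [Finset.sum_add_distrib, Finset.sum_const, Nat.card_Icc, nsmul_eq_mul,
          harmonic_eq_sum_Icc, add_tsub_cancel_right, mul_comm (n : ℝ)]
        push_cast
        rw [Finset.mul_sum]

-- The factor `24` makes the main term of `volume_real_near_rat_le` at most a twelfth of `v - u`, so
-- that most points of `[u, v]` have a Dirichlet approximation of denominator greater than `N / 24`.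
lemma eventually_volume_real_near_rat_le {u v : ℝ} (huv : u < v) : ∀ᶠ N : ℕ in atTop,
    volume.real ((⋃ q ∈ Finset.Icc 1 (N / 24), thickening (1 / N / (q : ℝ))
      (range fun p : ℤ ↦ (p : ℝ) / q)) ∩ Icc u v) ≤ (v - u) / 6 := by
  filter_upwards [tendsto_harmonic_div_atTop.eventually_le_const
    (by positivity : 0 < (v - u) / 72), eventually_gt_atTop 0] with N hharm hN
  have hN0 : (0 : ℝ) < N := by exact_mod_cast hN
  have hN24 : ((N / 24 : ℕ) : ℝ) ≤ N / 24 := Nat.cast_div_le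
  have hmono : (harmonic (N / 24) : ℝ) ≤ harmonic N := by
    simp only [harmonic, Rat.cast_sum]
    exact Finset.sum_le_sum_of_subset_of_nonneg
      (Finset.range_subset_range.mpr (Nat.div_le_self _ _)) fun _ _ _ ↦ by positivity
  calc _ ≤ 2 * (1 / N) * (v - u) * (N / 24 : ℕ) + 6 * (1 / N) * harmonic (N / 24) :=
        volume_real_near_rat_le huv.le (by positivity)
          (by rw [div_le_one hN0]; exact_mod_cast hN) _
    _ ≤ 2 * (1 / N) * (v - u) * (N / 24) + 6 * (1 / N) * harmonic N := by gcongr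
    _ = (v - u) / 12 + 6 * (harmonic N / N) := by
        field_simp
        ring
    _ ≤ (v - u) / 6 := by linarith

section NearRat

variable {Z : Set ℝ} {H : ℝ → ℝ} {K : ℝ}

lemma mem_thickening_rat_or_exists_height_le (hK : 0 ≤ K)
    (hnear : ∀ r : ℚ, ∃ α ∈ Z, H α ≤ K * r.den ^ 2 ∧ |r - α| ≤ K / r.den ^ 2) {N : ℕ}
    (hN : 0 < N) (y : ℝ) :
    (∃ q ∈ Finset.Icc 1 (N / 24), y ∈ thickening (1 / N / q) (range fun p : ℤ ↦ (p : ℝ) / q)) ∨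
      ∃ α ∈ Z, H α ≤ K * N ^ 2 ∧ dist y α < 600 * (1 + K) / N ^ 2 := by
  obtain ⟨r, hr, hden⟩ := Real.exists_rat_abs_sub_le_and_den_le y hN
  have hr' : dist y r < 1 / N / r.den := by
    rw [Real.dist_eq, div_div]
    refine hr.trans_lt ?_
    gcongr
    exact lt_add_one _
  rcases le_or_gt r.den (N / 24) with hq | hq
  · refine .inl ⟨r.den, Finset.mem_Icc.mpr ⟨r.den_pos, hq⟩, mem_thickening_iff.mpr ?_⟩
    exact ⟨r, ⟨r.num, (Rat.cast_def r).symm⟩, hr'⟩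
  · obtain ⟨α, hα, hαH, hrα⟩ := hnear r
    have hq24 : (N : ℝ) / 24 ≤ r.den := by
      rw [div_le_iff₀ (by norm_num)]
      exact_mod_cast (by lia : N ≤ r.den * 24)
    refine .inr ⟨α, hα, hαH.trans (by gcongr), ?_⟩
    calc dist y α ≤ dist y r + dist (r : ℝ) α := dist_triangle _ _ _
      _ < 1 / N / r.den + K / r.den ^ 2 := add_lt_add_of_lt_of_le hr' hrα
      _ ≤ 1 / N / (N / 24) + K / (N / 24) ^ 2 := by gcongr
      _ = (24 + 576 * K) / N ^ 2 := by
        field_simp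
        ring
      _ ≤ 600 * (1 + K) / N ^ 2 := by
        gcongr
        linarith

lemma eventually_le_ncard_height_le_sq (hsep : HeightSeparated Z H) (hK : 0 < K)
    (hnear : ∀ r : ℚ, ∃ α ∈ Z, H α ≤ K * r.den ^ 2 ∧ |r - α| ≤ K / r.den ^ 2) {u v : ℝ}
    (huv : u < v) : ∀ᶠ N : ℕ in atTop,
      (v - u) / (7200 * (1 + K)) * N ^ 2 ≤ ({α ∈ Z | H α ≤ K * N ^ 2} ∩ Icc u v).ncard := by
  set w := v - u
  have hρ0 : Tendsto (fun N : ℕ ↦ 600 * (1 + K) / (N : ℝ) ^ 2) atTop (nhds 0) :=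
    tendsto_const_nhds.div_atTop
      ((tendsto_pow_atTop two_ne_zero).comp tendsto_natCast_atTop_atTop)
  filter_upwards [eventually_volume_real_near_rat_le huv,
    hρ0.eventually_le_const (by positivity : 0 < w / 3), eventually_gt_atTop 0] with N hB hρ hN
  set B := ⋃ q ∈ Finset.Icc 1 (N / 24), thickening (1 / N / (q : ℝ)) (range fun p : ℤ ↦ (p : ℝ) / q)
  set S := {α ∈ Z | H α ≤ K * N ^ 2} ∩ Icc u v
  set ρ := 600 * (1 + K) / (N : ℝ) ^ 2
  have hSfin : S.Finite := hsep.finite_inter_Icc _ u v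
  have hcover : Icc (u + w / 3) (v - w / 3) ⊆ (B ∩ Icc u v) ∪ thickening ρ S := by
    rintro y ⟨hyu, hyv⟩
    rcases mem_thickening_rat_or_exists_height_le hK.le hnear hN y with
      ⟨q, hq, hyq⟩ | ⟨α, hα, hαH, hyα⟩
    · exact .inl ⟨mem_iUnion₂.mpr ⟨q, hq, hyq⟩, by linarith, by linarith⟩
    · have hlt := abs_sub_lt_iff.mp (Real.dist_eq y α ▸ hyα)
      exact .inr (mem_thickening_iff.mpr ⟨α, ⟨⟨hα, hαH⟩, by linarith, by linarith⟩, hyα⟩)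
  have htotal : w / 3 ≤ w / 6 + S.ncard * (2 * ρ) := by
    calc w / 3 = volume.real (Icc (u + w / 3) (v - w / 3)) := by
          rw [Real.volume_real_Icc_of_le (by linarith)]
          linarith
      _ ≤ volume.real ((B ∩ Icc u v) ∪ thickening ρ S) := measureReal_mono hcover
          (measure_union_lt_top (measure_inter_lt_top_of_right_ne_top measure_Icc_lt_top.ne)
            hSfin.isBounded.thickening.measure_lt_top).ne
      _ ≤ w / 6 + S.ncard * (2 * ρ) := (measureReal_union_le _ _).trans
          (add_le_add hB (volume_real_thickening_le hSfin (by positivity)))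
  have h6 : w / 6 ≤ S.ncard * (1200 * (1 + K)) / N ^ 2 := by
    have hρ' : S.ncard * (2 * ρ) = S.ncard * (1200 * (1 + K)) / N ^ 2 := by
      simp only [ρ]
      ring
    linarith
  rw [le_div_iff₀ (by positivity)] at h6
  rw [div_mul_eq_mul_div, div_le_iff₀ (by positivity)]
  linarith

lemma heightDense_of_near_rat (hsep : HeightSeparated Z H) (hK : 0 < K)
    (hnear : ∀ r : ℚ, ∃ α ∈ Z, H α ≤ K * r.den ^ 2 ∧ |r - α| ≤ K / r.den ^ 2) :
    HeightDense Z H := by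
  refine ⟨1 / (7200 * (1 + K)) / (4 * K), by positivity, fun u v huv ↦ ?_⟩
  have hsqrt : Tendsto (fun Q : ℝ ↦ √(Q / K)) atTop atTop :=
    Real.tendsto_sqrt_atTop.comp (tendsto_id.atTop_div_const hK)
  filter_upwards [(tendsto_nat_floor_atTop.comp hsqrt).eventually
      (eventually_le_ncard_height_le_sq hsep hK hnear huv),
    hsqrt.eventually_ge_atTop 2, eventually_ge_atTop 0] with Q hQ hQ2 hQ0
  simp only [Function.comp_apply] at hQ
  set N := ⌊√(Q / K)⌋₊
  have hsq : √(Q / K) ^ 2 = Q / K := Real.sq_sqrt (by positivity)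
  have hN : (N : ℝ) ≤ √(Q / K) := Nat.floor_le (Real.sqrt_nonneg _)
  have hN' : √(Q / K) / 2 ≤ N := by linarith [Nat.sub_one_lt_floor √(Q / K)]
  have hle : K * (N : ℝ) ^ 2 ≤ Q := by
    rw [← le_div_iff₀' hK, ← hsq]
    gcongr
  have hge : Q / (4 * K) ≤ (N : ℝ) ^ 2 := by
    calc Q / (4 * K) = (√(Q / K) / 2) ^ 2 := by
          rw [div_pow, hsq]
          field_simp
          norm_num
      _ ≤ (N : ℝ) ^ 2 := by gcongr
  calc _ = (v - u) / (7200 * (1 + K)) * (Q / (4 * K)) := by field_simp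
    _ ≤ (v - u) / (7200 * (1 + K)) * (N : ℝ) ^ 2 := by gcongr
    _ ≤ _ := hQ
    _ ≤ _ := by
      have hsub : {α ∈ Z | H α ≤ K * N ^ 2} ⊆ {α ∈ Z | H α ≤ Q} := fun α hα ↦
        ⟨hα.1, hα.2.trans hle⟩
      exact_mod_cast ncard_le_ncard (inter_subset_inter_left _ hsub) (hsep.finite_inter_Icc Q u v)

end NearRat

lemma IsGalConj.heightSeparated_mobOrbit {α σ : ℝ} (h : IsGalConj α σ) :
    HeightSeparated (mobOrbit α) qiHeight := by
  obtain ⟨κ, hκ, hle⟩ := h.exists_pos_le_abs_sub_mul_abs_sub_conj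
  refine ⟨min 1 (κ / 5), by positivity, ?_⟩
  rintro _ ⟨A, rfl⟩ _ ⟨B, rfl⟩ hne
  have hA := h.map_mob A
  have hB := h.map_mob B
  set x := max (qiHeight (mob A α)) (qiHeight (mob B α)) * |mob A α - mob B α|
  have hx : 0 ≤ x := mul_nonneg (hA.qiHeight_pos.le.trans (le_max_left _ _)) (abs_nonneg _)
  have hconj : |mob A σ - mob B σ| ≤
      |mob A α - mob B α| + |mob A α - mob A σ| + |mob B α - mob B σ| := by
    calc _ = |(mob A α - mob B α) - (mob A α - mob A σ) + (mob B α - mob B σ)| := by ring_nf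
      _ ≤ _ := (abs_add_le _ _).trans (by gcongr; exact abs_sub _ _)
  have hquad : κ ≤ x ^ 2 + 4 * x := by
    have hxA : qiHeight (mob A α) * |mob A α - mob B α| ≤ x :=
      mul_le_mul_of_nonneg_right (le_max_left _ _) (abs_nonneg _)
    have hxB : qiHeight (mob B α) * |mob A α - mob B α| ≤ x :=
      mul_le_mul_of_nonneg_right (le_max_right _ _) (abs_nonneg _)
    have hA2 : qiHeight (mob A α) * |mob A α - mob A σ| = 2 := by
      rw [hA.qiHeight_eq, div_mul_cancel₀ _ hA.abs_sub_pos.ne']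
    have hB2 : qiHeight (mob B α) * |mob B α - mob B σ| = 2 := by
      rw [hB.qiHeight_eq, div_mul_cancel₀ _ hB.abs_sub_pos.ne']
    have hApos := hA.qiHeight_pos
    have hBpos := hB.qiHeight_pos
    calc κ ≤ |mob A α - mob B α| * |mob A σ - mob B σ| *
          (qiHeight (mob A α) * qiHeight (mob B α)) := hle A B hne
      _ ≤ |mob A α - mob B α| *
          (|mob A α - mob B α| + |mob A α - mob A σ| + |mob B α - mob B σ|) *
          (qiHeight (mob A α) * qiHeight (mob B α)) := by gcongr
      _ = (qiHeight (mob A α) * |mob A α - mob B α|) * (qiHeight (mob B α) * |mob A α - mob B α|) +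
          (qiHeight (mob A α) * |mob A α - mob A σ|) * (qiHeight (mob B α) * |mob A α - mob B α|) +
          (qiHeight (mob A α) * |mob A α - mob B α|) * (qiHeight (mob B α) * |mob B α - mob B σ|) :=
        by ring
      _ ≤ x * x + 2 * x + x * 2 := by
        rw [hA2, hB2]
        gcongr
      _ = x ^ 2 + 4 * x := by ring
  rw [Real.dist_eq, min_le_iff]
  by_contra! hlt
  nlinarith [hlt.1, hlt.2]

lemma IsGalConj.heightDense_mobOrbit {α σ : ℝ} (h : IsGalConj α σ) :
    HeightDense (mobOrbit α) qiHeight :=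
  let ⟨_, hK, hnear⟩ := h.exists_mem_mobOrbit_near_rat
  heightDense_of_near_rat h.heightSeparated_mobOrbit hK hnear

/-! ### Second moments and limsup sets -/

lemma sq_mul_indicator_biUnion_sub_sum_indicator {X ι : Type*} (I : Finset ι) (B : ι → Set X)
    (s : ℝ) (x : X) :
    (s * (⋃ i ∈ I, B i).indicator 1 x - ∑ i ∈ I, (B i).indicator 1 x) ^ 2 =
      s ^ 2 * (⋃ i ∈ I, B i).indicator 1 x - 2 * s * ∑ i ∈ I, (B i).indicator 1 x +
        ∑ i ∈ I, ∑ j ∈ I, (B i ∩ B j).indicator 1 x := by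
  have hsq : ∑ i ∈ I, ∑ j ∈ I, (B i ∩ B j).indicator (1 : X → ℝ) x =
      (∑ i ∈ I, (B i).indicator (1 : X → ℝ) x) ^ 2 := by
    simp only [sq, Finset.sum_mul_sum, inter_indicator_one, Pi.mul_apply]
  rw [hsq]
  by_cases hx : x ∈ ⋃ i ∈ I, B i
  · rw [indicator_of_mem hx, Pi.one_apply]
    ring
  · have hx' : ∑ i ∈ I, (B i).indicator (1 : X → ℝ) x = 0 :=
      Finset.sum_eq_zero fun i hi ↦ indicator_of_notMem (fun h ↦ hx (mem_biUnion hi h)) _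
    rw [indicator_of_notMem hx, hx']
    ring

/-- **Chung–Erdős inequality**. -/
lemma sq_sum_measureReal_le {X ι : Type*} [MeasurableSpace X] {μ : Measure X} (I : Finset ι)
    {B : ι → Set X} (hB : ∀ i ∈ I, MeasurableSet (B i)) (hfin : ∀ i ∈ I, μ (B i) ≠ ⊤) :
    (∑ i ∈ I, μ.real (B i)) ^ 2 ≤
      (∑ i ∈ I, ∑ j ∈ I, μ.real (B i ∩ B j)) * μ.real (⋃ i ∈ I, B i) := by
  set U := ⋃ i ∈ I, B i with hUdef
  have hU : MeasurableSet U := I.measurableSet_biUnion hB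
  have hUfin : μ U ≠ ⊤ := (measure_biUnion_lt_top I.finite_toSet fun i hi ↦ (hfin i hi).lt_top).ne
  have hint : ∀ {E : Set X}, MeasurableSet E → μ E ≠ ⊤ → Integrable (E.indicator (1 : X → ℝ)) μ :=
    fun hE hE' ↦ (integrable_indicator_iff hE).mpr (integrableOn_const hE')
  have hintB : ∀ i ∈ I, Integrable ((B i).indicator (1 : X → ℝ)) μ :=
    fun i hi ↦ hint (hB i hi) (hfin i hi)
  have hintBB : ∀ i ∈ I, ∀ j ∈ I, Integrable ((B i ∩ B j).indicator (1 : X → ℝ)) μ :=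
    fun i hi j hj ↦ hint ((hB i hi).inter (hB j hj))
      (measure_ne_top_of_subset inter_subset_left (hfin i hi))
  have hintSS := integrable_finsetSum I fun i hi ↦ integrable_finsetSum I (hintBB i hi)
  -- The integral of `(s 1_U - ∑ 1_{B i}) ^ 2` is a nonnegative quadratic polynomial in `s`.
  have hquad : ∀ s : ℝ, 0 ≤ μ.real U * (s * s) + -(2 * ∑ i ∈ I, μ.real (B i)) * s +
      ∑ i ∈ I, ∑ j ∈ I, μ.real (B i ∩ B j) := by
    intro s
    have hnonneg : 0 ≤ ∫ x, (s * U.indicator 1 x - ∑ i ∈ I, (B i).indicator (1 : X → ℝ) x) ^ 2 ∂μ :=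
      integral_nonneg fun x ↦ sq_nonneg _
    have hintU := (hint hU hUfin).const_mul (s ^ 2)
    have hintS := (integrable_finsetSum I hintB).const_mul (2 * s)
    have hintUS : Integrable (fun x ↦ s ^ 2 * U.indicator 1 x -
        2 * s * ∑ i ∈ I, (B i).indicator (1 : X → ℝ) x) μ := hintU.sub hintS
    simp only [hUdef, sq_mul_indicator_biUnion_sub_sum_indicator] at hnonneg
    rw [← hUdef, integral_add hintUS hintSS, integral_sub hintU hintS, integral_const_mul,
      integral_const_mul, integral_indicator_one hU, integral_finsetSum _ hintB,
      integral_finsetSum _ fun i hi ↦ integrable_finsetSum I (hintBB i hi),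
      Finset.sum_congr rfl fun i hi ↦ integral_indicator_one (hB i hi),
      Finset.sum_congr rfl fun i hi ↦ (integral_finsetSum I (hintBB i hi)).trans
        (Finset.sum_congr rfl fun j hj ↦ integral_indicator_one ((hB i hi).inter (hB j hj)))]
      at hnonneg
    linarith
  have hdiscrim := discrim_le_zero hquad
  rw [discrim] at hdiscrim
  linarith

lemma le_measure_limsup_atTop {X : Type*} [MeasurableSpace X] {μ : Measure X} [IsFiniteMeasure μ]
    {E : ℕ → Set X} (hE : ∀ k, MeasurableSet (E k)) {κ : ENNReal}
    (h : ∀ n, κ ≤ μ (⋃ k ≥ n, E k)) : κ ≤ μ (limsup E atTop) := by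
  have hanti : Antitone fun n ↦ ⋃ k ≥ n, E k := fun m n hmn ↦
    biUnion_subset_biUnion_left fun _ hk ↦ hmn.trans hk
  have hmeas : ∀ n, NullMeasurableSet (⋃ k ≥ n, E k) μ := fun n ↦
    (MeasurableSet.biUnion (to_countable _) fun k _ ↦ hE k).nullMeasurableSet
  rw [limsup_eq_iInf_iSup_of_nat]
  exact ge_of_tendsto' (tendsto_measure_iInter_atTop hmeas hanti ⟨0, measure_ne_top _ _⟩) h

lemma measure_compl_eq_zero_of_le_measure_inter_closedBall {X : Type*} [MetricSpace X]
    [ProperSpace X] [HasBesicovitchCovering X] [MeasurableSpace X] [BorelSpace X] {μ : Measure X}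
    [IsLocallyFiniteMeasure μ] [μ.IsOpenPosMeasure] {G : Set X} (hG : MeasurableSet G)
    {κ : ENNReal} (hκ : κ ≠ 0)
    (h : ∀ x r, 0 < r → κ * μ (closedBall x r) ≤ μ (G ∩ closedBall x r)) : μ Gᶜ = 0 := by
  change ∀ᵐ x ∂μ, x ∈ G
  filter_upwards [Besicovitch.ae_tendsto_measure_inter_div_of_measurableSet μ hG] with x hx
  by_contra hxG
  rw [indicator_of_notMem hxG] at hx
  refine hκ (nonpos_iff_eq_zero.mp (ge_of_tendsto hx ?_))
  filter_upwards [self_mem_nhdsWithin] with r hr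
  rw [ENNReal.le_div_iff_mul_le (.inl (measure_closedBall_pos μ x hr).ne')
    (.inl measure_closedBall_lt_top.ne)]
  exact h x r hr

lemma sum_ite_two_pow_div_two_pow_le (I : Finset ℕ) (l : ℕ) :
    ∑ k ∈ I, (if k ≤ l then (2 : ℝ) ^ k / 2 ^ l else 0) ≤ 2 := by
  rw [← Finset.sum_filter, ← Finset.sum_div, div_le_iff₀ (by positivity)]
  calc ∑ k ∈ I with k ≤ l, (2 : ℝ) ^ k ≤ ∑ k ∈ Finset.range (l + 1), (2 : ℝ) ^ k := by
        refine Finset.sum_le_sum_of_subset_of_nonneg (fun k hk ↦ ?_) fun _ _ _ ↦ by positivity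
        simpa [Nat.lt_succ_iff] using (Finset.mem_filter.mp hk).2
    _ = 2 ^ (l + 1) - 1 := by
        rw [geom_sum_eq (by norm_num)]
        norm_num
    _ ≤ 2 * 2 ^ l := by
        rw [pow_succ]
        linarith

lemma sum_sum_mul_add_two_pow_div_le {a : ℕ → ℝ} {I : Finset ℕ} (ha : ∀ k, 0 ≤ a k)
    (hsum : 1 ≤ ∑ k ∈ I, a k) :
    ∑ k ∈ I, ∑ l ∈ I, (a k * a l + a l * (if k ≤ l then (2 : ℝ) ^ k / 2 ^ l else 0) +
      a k * (if l ≤ k then (2 : ℝ) ^ l / 2 ^ k else 0)) ≤ 5 * (∑ k ∈ I, a k) ^ 2 := by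
  set A := ∑ k ∈ I, a k with hA
  have hle : ∑ l ∈ I, ∑ k ∈ I, a l * (if k ≤ l then (2 : ℝ) ^ k / 2 ^ l else 0) ≤ A * 2 := by
    rw [hA, Finset.sum_mul]
    refine Finset.sum_le_sum fun l _ ↦ ?_
    rw [← Finset.mul_sum]
    exact mul_le_mul_of_nonneg_left (sum_ite_two_pow_div_two_pow_le I l) (ha l)
  simp only [Finset.sum_add_distrib]
  rw [← Finset.sum_mul_sum, Finset.sum_comm (f := fun k l ↦
    a l * (if k ≤ l then (2 : ℝ) ^ k / 2 ^ l else 0)), ← hA]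
  linarith [le_self_pow₀ hsum two_ne_zero]

section SecondMoment

variable {u v δ : ℝ}

lemma volume_real_thickening_inter_thickening_le_mul {S S' : Set ℝ} {ε ε' a b : ℝ} (hε : 0 < ε)
    (hε' : 0 < ε') (hS : S ⊆ Icc u v) (hsep : S.Pairwise fun s t ↦ ε ≤ dist s t)
    (hsep' : S'.Pairwise fun s t ↦ ε' ≤ dist s t) (hεw : ε ≤ v - u) (ha : 0 ≤ a) (hb : 0 ≤ b)
    (hb' : 2 * b ≤ 1) :
    volume.real (thickening (a * ε) S ∩ thickening (b * ε') S') ≤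
      8 * (v - u) * (a * b + b * (ε' / ε)) := by
  have huv : u ≤ v := by linarith
  obtain ⟨hfin, hcard⟩ := finite_and_ncard_le_of_pairwise_le_dist hε huv hS hsep
  have hcard' : (S.ncard : ℝ) ≤ 2 * ((v - u) / ε) := by
    have : 1 ≤ (v - u) / ε := (one_le_div hε).mpr hεw
    linarith
  calc _ ≤ S.ncard * (((2 * (a * ε) + 2 * (b * ε')) / ε' + 1) * (2 * (b * ε'))) :=
        volume_real_thickening_inter_thickening_le hfin hε' hsep' (by positivity) (by positivity)
    _ = S.ncard * ((2 * a * ε / ε' + (2 * b + 1)) * (2 * (b * ε'))) := by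
        field_simp
        ring
    _ ≤ 2 * ((v - u) / ε) * ((2 * a * ε / ε' + (1 + 1)) * (2 * (b * ε'))) := by gcongr
    _ = 8 * (v - u) * (a * b + b * (ε' / ε)) := by
        field_simp
        ring

variable {S : ℕ → Set ℝ} {a : ℕ → ℝ} {I : Finset ℕ}

lemma sum_sum_volume_real_thickening_inter_le (hδ : 0 < δ) (huv : u < v)
    (hS : ∀ k ∈ I, S k ⊆ Icc u v)
    (hsep : ∀ k ∈ I, (S k).Pairwise fun s t ↦ δ / 2 ^ k ≤ dist s t)
    (hscale : ∀ k ∈ I, δ / 2 ^ k ≤ v - u) (ha : ∀ k, 0 ≤ a k) (ha' : ∀ k, 2 * a k ≤ 1)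
    (hsum : 1 ≤ ∑ k ∈ I, a k) :
    ∑ k ∈ I, ∑ l ∈ I, volume.real
      (thickening (a k * (δ / 2 ^ k)) (S k) ∩ thickening (a l * (δ / 2 ^ l)) (S l)) ≤
      40 * (v - u) * (∑ k ∈ I, a k) ^ 2 := by
  set θ : ℕ → ℕ → ℝ := fun k l ↦ if k ≤ l then 2 ^ k / 2 ^ l else 0
  have hθ : ∀ k l, 0 ≤ θ k l := fun k l ↦ by
    simp only [θ]
    positivity
  have hle : ∀ k ∈ I, ∀ l ∈ I, k ≤ l → volume.real
      (thickening (a k * (δ / 2 ^ k)) (S k) ∩ thickening (a l * (δ / 2 ^ l)) (S l)) ≤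
      8 * (v - u) * (a k * a l + a l * θ k l) := by
    intro k hk l hl hkl
    have hratio : θ k l = δ / 2 ^ l / (δ / 2 ^ k) := by
      simp only [θ, if_pos hkl]
      field_simp
    rw [hratio]
    exact volume_real_thickening_inter_thickening_le_mul (by positivity) (by positivity) (hS k hk)
      (hsep k hk) (hsep l hl) (hscale k hk) (ha k) (ha l) (ha' l)
  have hpair : ∀ k ∈ I, ∀ l ∈ I, volume.real
      (thickening (a k * (δ / 2 ^ k)) (S k) ∩ thickening (a l * (δ / 2 ^ l)) (S l)) ≤
      8 * (v - u) * (a k * a l + a l * θ k l + a k * θ l k) := by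
    intro k hk l hl
    rcases le_total k l with hkl | hlk
    · refine (hle k hk l hl hkl).trans (mul_le_mul_of_nonneg_left ?_ (by positivity))
      linarith [mul_nonneg (ha k) (hθ l k)]
    · rw [inter_comm]
      refine (hle l hl k hk hlk).trans (mul_le_mul_of_nonneg_left ?_ (by positivity))
      linarith [mul_nonneg (ha l) (hθ k l), mul_comm (a k) (a l)]
  refine (Finset.sum_le_sum fun k hk ↦ Finset.sum_le_sum fun l hl ↦ hpair k hk l hl).trans ?_
  simp only [← Finset.mul_sum]
  linarith [mul_le_mul_of_nonneg_left (sum_sum_mul_add_two_pow_div_le ha hsum)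
    (by positivity : 0 ≤ 8 * (v - u))]

lemma le_volume_real_biUnion_thickening {c : ℝ} (hδ : 0 < δ) (hc : 0 ≤ c) (huv : u < v)
    (hS : ∀ k ∈ I, S k ⊆ Icc u v)
    (hsep : ∀ k ∈ I, (S k).Pairwise fun s t ↦ δ / 2 ^ k ≤ dist s t)
    (hcard : ∀ k ∈ I, c * (v - u) ≤ (S k).ncard * (δ / 2 ^ k))
    (hscale : ∀ k ∈ I, δ / 2 ^ k ≤ v - u) (ha : ∀ k, 0 ≤ a k) (ha' : ∀ k, 2 * a k ≤ 1)
    (hsum : 1 ≤ ∑ k ∈ I, a k) :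
    c ^ 2 / 10 * (v - u) ≤ volume.real (⋃ k ∈ I, thickening (a k * (δ / 2 ^ k)) (S k)) := by
  have hfin : ∀ k ∈ I, (S k).Finite := fun k hk ↦
    (finite_and_ncard_le_of_pairwise_le_dist (by positivity) huv.le (hS k hk) (hsep k hk)).1
  set A := ∑ k ∈ I, a k with hA
  have hfirst : 2 * (c * (v - u)) * A ≤
      ∑ k ∈ I, volume.real (thickening (a k * (δ / 2 ^ k)) (S k)) := by
    rw [hA, Finset.mul_sum]
    refine Finset.sum_le_sum fun k hk ↦ ?_
    have hε : 0 < δ / 2 ^ k := by positivity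
    have hak := ha k
    rw [volume_real_thickening_eq (hfin k hk) (hsep k hk) (by positivity)
      (by nlinarith [ha' k])]
    nlinarith [mul_le_mul_of_nonneg_right (hcard k hk) hak]
  have hCE := sq_sum_measureReal_le (μ := volume) I
    (fun k _ ↦ (isOpen_thickening (δ := a k * (δ / 2 ^ k)) (E := S k)).measurableSet)
    fun k hk ↦ (hfin k hk).isBounded.thickening.measure_lt_top.ne
  have hsecond := sum_sum_volume_real_thickening_inter_le hδ huv hS hsep hscale ha ha' hsum
  set V := volume.real (⋃ k ∈ I, thickening (a k * (δ / 2 ^ k)) (S k))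
  have hchain : 40 * (v - u) * A ^ 2 * (c ^ 2 / 10 * (v - u)) ≤ 40 * (v - u) * A ^ 2 * V := by
    calc _ = (2 * (c * (v - u)) * A) ^ 2 := by ring
      _ ≤ _ := pow_le_pow_left₀ (by positivity) hfirst 2
      _ ≤ _ := hCE
      _ ≤ 40 * (v - u) * A ^ 2 * V := mul_le_mul_of_nonneg_right hsecond measureReal_nonneg
  exact le_of_mul_le_mul_left hchain (by positivity)

end SecondMoment

lemma thickening_inter_closedBall_subset {X : Type*} [PseudoMetricSpace X] {S : Set X} {x : X}
    {r ρ : ℝ} :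
    thickening ρ (S ∩ closedBall x r) ⊆ thickening ρ S ∩ closedBall x (r + ρ) := by
  refine fun y hy ↦ ⟨thickening_subset_of_subset _ inter_subset_left hy, ?_⟩
  obtain ⟨s, ⟨-, hs⟩, hys⟩ := mem_thickening_iff.mp hy
  rw [mem_closedBall] at hs ⊢
  linarith [dist_triangle y s x]

lemma exists_one_le_sum_Ico_of_not_summable {a : ℕ → ℝ} (ha : ∀ k, 0 ≤ a k) (h : ¬ Summable a)
    (p : ℕ) : ∃ q, 1 ≤ ∑ k ∈ Finset.Ico p q, a k := by
  obtain ⟨q, hpq, hq⟩ : ∃ q, p ≤ q ∧ 1 + ∑ k ∈ Finset.range p, a k ≤ ∑ k ∈ Finset.range q, a k :=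
    ((eventually_ge_atTop p).and (((not_summable_iff_tendsto_nat_atTop_of_nonneg ha).mp
      h).eventually_ge_atTop _)).exists
  refine ⟨q, ?_⟩
  rw [Finset.sum_Ico_eq_sub _ hpq]
  linarith

section Limsup

variable {Z : Set ℝ} {H : ℝ → ℝ}

lemma exists_le_volume_biUnion_thickening_heightBlock (hsep : HeightSeparated Z H)
    (hdense : HeightDense Z H) : ∃ δ > 0, ∃ m > 0, ∃ κ > 0, ∀ a : ℕ → ℝ, (∀ k, 0 ≤ a k) →
      (∀ k, 2 * a k ≤ 1) → ¬ Summable a → ∀ (n : ℕ) (x r : ℝ), 0 < r →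
        ENNReal.ofReal (κ * r) ≤ volume ((⋃ k ≥ n, thickening (a k * (δ / 2 ^ k))
          (heightBlock Z H (m * 2 ^ k) (2 ^ k))) ∩ closedBall x r) := by
  obtain ⟨c, hc, m, hm, hblock⟩ := hdense.exists_le_ncard_heightBlock hsep
  obtain ⟨δ, hδ, hsep⟩ := hsep
  refine ⟨δ, hδ, m, hm, (c * δ) ^ 2 / 10, by positivity, fun a ha ha' hdiv n x r hr ↦ ?_⟩
  set S : ℕ → Set ℝ := fun k ↦ heightBlock Z H (m * 2 ^ k) (2 ^ k) ∩ Icc (x - r / 2) (x + r / 2)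
  have hw : x + r / 2 - (x - r / 2) = r := by ring
  have hpow : Tendsto (fun k : ℕ ↦ (2 : ℝ) ^ k) atTop atTop :=
    tendsto_pow_atTop_atTop_of_one_lt one_lt_two
  obtain ⟨p, hp⟩ := eventually_atTop.mp <|
    ((hpow.eventually (hblock (x - r / 2) (x + r / 2) (by linarith))).and
      ((hpow.const_div_atTop δ).eventually_le_const hr)).and (eventually_ge_atTop n)
  obtain ⟨q, hq⟩ := exists_one_le_sum_Ico_of_not_summable ha hdiv p
  have hI : ∀ k ∈ Finset.Ico p q, p ≤ k := fun k hk ↦ (Finset.mem_Ico.mp hk).1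
  have hlarge : (c * δ) ^ 2 / 10 * (x + r / 2 - (x - r / 2)) ≤
      volume.real (⋃ k ∈ Finset.Ico p q, thickening (a k * (δ / 2 ^ k)) (S k)) := by
    refine le_volume_real_biUnion_thickening hδ (by positivity) (by linarith)
      (fun k _ ↦ inter_subset_right) (fun k _ ↦ ?_) (fun k hk ↦ ?_) (fun k hk ↦ ?_) ha ha' hq
    · have hsubset : S k ⊆ {α ∈ Z | H α ≤ 2 ^ k} := fun α hα ↦ ⟨hα.1.1, hα.1.2.2⟩
      exact (pairwise_le_dist_of_height_le (by positivity) hsep).mono hsubset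
    · rw [← mul_div_assoc, le_div_iff₀ (by positivity)]
      linarith [mul_le_mul_of_nonneg_right (hp k (hI k hk)).1.1 hδ.le]
    · rw [hw]
      exact (hp k (hI k hk)).1.2
  have hsub : (⋃ k ∈ Finset.Ico p q, thickening (a k * (δ / 2 ^ k)) (S k)) ⊆
      (⋃ k ≥ n, thickening (a k * (δ / 2 ^ k)) (heightBlock Z H (m * 2 ^ k) (2 ^ k))) ∩
        closedBall x r := by
    refine iUnion₂_subset fun k hk y hy ↦ ?_
    have hρ : r / 2 + a k * (δ / 2 ^ k) ≤ r := by
      nlinarith [(hp k (hI k hk)).1.2, ha' k, (by positivity : 0 < δ / 2 ^ k)]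
    simp only [S, ← Real.closedBall_eq_Icc] at hy
    obtain ⟨hyS, hyx⟩ := thickening_inter_closedBall_subset hy
    exact ⟨mem_biUnion (hp k (hI k hk)).2 hyS, closedBall_subset_closedBall hρ hyx⟩
  rw [hw] at hlarge
  refine ENNReal.ofReal_le_of_le_toReal (hlarge.trans (measureReal_mono hsub ?_))
  exact (measure_inter_lt_top_of_right_ne_top measure_closedBall_lt_top.ne).ne

lemma exists_volume_compl_limsup_thickening_heightBlock_eq_zero (hsep : HeightSeparated Z H)
    (hdense : HeightDense Z H) : ∃ δ > 0, ∃ m > 0, ∀ a : ℕ → ℝ, (∀ k, 0 ≤ a k) →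
      (∀ k, 2 * a k ≤ 1) → ¬ Summable a →
        volume (limsup (fun k ↦ thickening (a k * (δ / 2 ^ k))
          (heightBlock Z H (m * 2 ^ k) (2 ^ k))) atTop)ᶜ = 0 := by
  obtain ⟨δ, hδ, m, hm, κ, hκ, hlarge⟩ :=
    exists_le_volume_biUnion_thickening_heightBlock hsep hdense
  refine ⟨δ, hδ, m, hm, fun a ha ha' hdiv ↦ ?_⟩
  have hmeas : ∀ k, MeasurableSet
      (thickening (a k * (δ / 2 ^ k)) (heightBlock Z H (m * 2 ^ k) (2 ^ k))) :=
    fun k ↦ isOpen_thickening.measurableSet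
  refine measure_compl_eq_zero_of_le_measure_inter_closedBall (.measurableSet_limsup hmeas)
    (κ := ENNReal.ofReal (κ / 2)) (by simpa using hκ) fun x r hr ↦ ?_
  have hfinite : IsFiniteMeasure (volume.restrict (closedBall x r)) :=
    isFiniteMeasure_restrict.mpr measure_closedBall_lt_top.ne
  rw [Real.volume_closedBall, ← ENNReal.ofReal_mul (by positivity),
    ← Measure.restrict_apply (.measurableSet_limsup hmeas)]
  refine le_measure_limsup_atTop hmeas fun n ↦ ?_
  rw [Measure.restrict_apply (.iUnion fun k ↦ .iUnion fun _ ↦ hmeas k)]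
  convert hlarge a ha ha' hdiv n x r hr using 2
  ring

end Limsup

/-! ### Functions of bounded multiplicative oscillation -/

/-- `ψ` is O-regularly varying, uniformly on `(0, ∞)`: it is positive there, and its values at two
points whose ratio stays in a compact subset of `(0, ∞)` are comparable. The values of `ψ` on
`(-∞, 0]` are irrelevant. -/
structure IsORegular (ψ : ℝ → ℝ) : Prop where
  pos : ∀ t, 0 < t → 0 < ψ t
  exists_le_mul : ∀ M : ℝ, ∃ C > 0, ∀ s t, 0 < s → 0 < t → s ≤ M * t → t ≤ M * s → ψ s ≤ C * ψ t

lemma isORegular_of_lipschitzWith_log {ψ : ℝ → ℝ} (hpos : ∀ t, 0 < t → 0 < ψ t)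
    (hLip : ∃ L : NNReal, LipschitzWith L fun t : ℝ ↦ Real.log (ψ (Real.exp t))) :
    IsORegular ψ := by
  obtain ⟨L, hL⟩ := hLip
  refine ⟨hpos, fun M ↦ ⟨Real.exp (L * Real.log M), Real.exp_pos _, fun s t hs ht hst hts ↦ ?_⟩⟩
  have hM : 0 < M := pos_of_mul_pos_left (hs.trans_le hst) ht.le
  have hlog : |Real.log s - Real.log t| ≤ Real.log M := by
    have hst' := Real.log_le_log hs hst
    have hts' := Real.log_le_log ht hts
    rw [Real.log_mul hM.ne' ht.ne'] at hst'
    rw [Real.log_mul hM.ne' hs.ne'] at hts'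
    exact abs_sub_le_iff.mpr ⟨by linarith, by linarith⟩
  have hdist := hL.dist_le_mul (Real.log s) (Real.log t)
  simp only [Real.exp_log hs, Real.exp_log ht, Real.dist_eq] at hdist
  have hψ : Real.log (ψ s) ≤ L * Real.log M + Real.log (ψ t) := by
    linarith [le_of_abs_le hdist, mul_le_mul_of_nonneg_left hlog L.coe_nonneg]
  rwa [← Real.log_le_log_iff (hpos s hs) (mul_pos (Real.exp_pos _) (hpos t ht)),
    Real.log_mul (Real.exp_ne_zero _) (hpos t ht).ne', Real.log_exp]

lemma lintegral_Ioi_one_eq_tsum (f : ℝ → ENNReal) :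
    ∫⁻ t in Ioi 1, f t = ∑' k : ℕ, ∫⁻ t in Ioc ((2 : ℝ) ^ k) (2 ^ (k + 1)), f t := by
  have hmono : Monotone fun k : ℕ ↦ (2 : ℝ) ^ k := pow_right_mono₀ one_le_two
  have hunion : ⋃ k : ℕ, Ioc ((2 : ℝ) ^ k) (2 ^ (k + 1)) = Ioi 1 := by
    simpa using iUnion_Ioc_map_succ_eq_Ioi (f := fun k : ℕ ↦ (2 : ℝ) ^ k)
      (fun k ↦ hmono bot_le)
      (not_bddAbove_of_tendsto_atTop (tendsto_pow_atTop_atTop_of_one_lt one_lt_two))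
  rw [← hunion]
  exact lintegral_iUnion (fun _ ↦ measurableSet_Ioc) hmono.pairwise_disjoint_on_Ioc_succ _

namespace IsORegular

variable {ψ : ℝ → ℝ}

lemma exists_comparable (hψ : IsORegular ψ) {a : ℝ} (ha : 0 < a) (b : ℝ) : ∃ C > 0,
    ∀ s t, 0 < s → t ∈ Icc (a * s) (b * s) → ψ t ≤ C * ψ s ∧ ψ s ≤ C * ψ t := by
  obtain ⟨C, hC, hle⟩ := hψ.exists_le_mul (max b (1 / a))
  refine ⟨C, hC, fun s t hs ⟨hat, htb⟩ ↦ ?_⟩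
  have ht : 0 < t := (mul_pos ha hs).trans_le hat
  have hts : t ≤ max b (1 / a) * s :=
    htb.trans (mul_le_mul_of_nonneg_right (le_max_left _ _) hs.le)
  have hst : s ≤ max b (1 / a) * t := by
    calc s = 1 / a * (a * s) := by field_simp
      _ ≤ max b (1 / a) * t := by
        gcongr
        exact le_max_right _ _
  exact ⟨hle t s ht hs hts hst, hle s t hs ht hst hts⟩

lemma exists_lintegral_Ioc_mem_Icc (hψ : IsORegular ψ) : ∃ C > 0, ∀ k : ℕ,
    ∫⁻ t in Ioc ((2 : ℝ) ^ k) (2 ^ (k + 1)), ENNReal.ofReal (ψ t) ∈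
      Icc (ENNReal.ofReal (2 ^ k * ψ (2 ^ k) / C)) (ENNReal.ofReal (C * (2 ^ k * ψ (2 ^ k)))) := by
  obtain ⟨C, hC, hcomp⟩ := hψ.exists_comparable one_pos 2
  refine ⟨C, hC, fun k ↦ ?_⟩
  have hpow : (0 : ℝ) < 2 ^ k := by positivity
  have hconst : ∀ c : ℝ, ∫⁻ _ in Ioc ((2 : ℝ) ^ k) (2 ^ (k + 1)), ENNReal.ofReal c =
      ENNReal.ofReal (c * 2 ^ k) := fun c ↦ by
    rw [setLIntegral_const, Real.volume_Ioc, ENNReal.ofReal_mul' hpow.le]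
    congr 2
    ring
  have hcomp : ∀ t ∈ Ioc ((2 : ℝ) ^ k) (2 ^ (k + 1)),
      ψ t ≤ C * ψ (2 ^ k) ∧ ψ (2 ^ k) ≤ C * ψ t := fun t ⟨ht, ht'⟩ ↦
    hcomp _ t hpow ⟨by linarith, by linarith [pow_succ (2 : ℝ) k]⟩
  constructor
  · calc _ = ∫⁻ _ in Ioc ((2 : ℝ) ^ k) (2 ^ (k + 1)), ENNReal.ofReal (ψ (2 ^ k) / C) := by
          rw [hconst, div_mul_eq_mul_div, mul_comm (ψ _)]
      _ ≤ _ := setLIntegral_mono' measurableSet_Ioc fun t ht ↦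
          ENNReal.ofReal_le_ofReal ((div_le_iff₀' hC).mpr (hcomp t ht).2)
  · calc _ ≤ ∫⁻ _ in Ioc ((2 : ℝ) ^ k) (2 ^ (k + 1)), ENNReal.ofReal (C * ψ (2 ^ k)) :=
          setLIntegral_mono' measurableSet_Ioc fun t ht ↦
            ENNReal.ofReal_le_ofReal (hcomp t ht).1
      _ = _ := by rw [hconst, mul_assoc, mul_comm (ψ _)]

lemma lintegral_Ioi_one_lt_top_iff (hψ : IsORegular ψ) :
    ∫⁻ t in Ioi 1, ENNReal.ofReal (ψ t) < ⊤ ↔ Summable fun k : ℕ ↦ 2 ^ k * ψ (2 ^ k) := by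
  obtain ⟨C, hC, hmem⟩ := hψ.exists_lintegral_Ioc_mem_Icc
  rw [lintegral_Ioi_one_eq_tsum]
  constructor
  · intro hlt
    have hsum := ENNReal.summable_toReal
      ((ENNReal.tsum_le_tsum fun k ↦ (hmem k).1).trans_lt hlt).ne
    refine (summable_div_const_iff hC.ne').mp (hsum.congr fun k ↦ ?_)
    have hψk : 0 < ψ (2 ^ k) := hψ.pos _ (by positivity)
    exact ENNReal.toReal_ofReal (by positivity)
  · intro hsum
    exact (ENNReal.tsum_le_tsum fun k ↦ (hmem k).2).trans_lt (hsum.mul_left C).tsum_ofReal_lt_top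

end IsORegular

/-! ### Khintchine's theorem for sets with a height -/

lemma summable_of_summable_min {ι : Type*} {f : ι → ℝ} {c : ℝ} (hc : 0 < c)
    (h : Summable fun i ↦ min c (f i)) : Summable f := by
  refine (summable_congr_cofinite ?_).mp h
  filter_upwards [h.tendsto_cofinite_zero.eventually_lt_const hc] with i hi
  exact min_eq_right ((min_lt_iff.mp hi).resolve_left (lt_irrefl c)).le

section Khintchine

variable {Z : Set ℝ} {H ψ : ℝ → ℝ}

lemma exists_nat_mem_heightBlock_of_le_height {h : ℝ} (hh : 0 < h) {α : ℝ} (hα : α ∈ Z)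
    (hαH : h ≤ H α) : ∃ k : ℕ, α ∈ heightBlock Z H (h * 2 ^ k) (2 * h * 2 ^ k) := by
  obtain ⟨k, hk, hk'⟩ := exists_nat_pow_near ((one_le_div hh).mpr hαH) one_lt_two
  rw [le_div_iff₀' hh] at hk
  rw [div_lt_iff₀' hh, pow_succ] at hk'
  exact ⟨k, hα, hk, by linarith⟩

lemma HeightSeparated.exists_lt_height_of_infinite (hsep : HeightSeparated Z H) {h : ℝ}
    (hh : 0 < h) (hH : ∀ α ∈ Z, h ≤ H α) (hψ : IsORegular ψ) {y : ℝ}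
    (hy : {α | α ∈ Z ∧ |y - α| ≤ ψ (H α)}.Infinite) (Q : ℝ) :
    ∃ α ∈ Z, |y - α| ≤ ψ (H α) ∧ Q < H α := by
  by_contra! hQ
  obtain ⟨C, -, hcomp⟩ := hψ.exists_comparable hh Q
  refine hy ((hsep.finite_inter_Icc Q (y - C * ψ 1) (y + C * ψ 1)).subset ?_)
  rintro α ⟨hα, hyα⟩
  have hψα : ψ (H α) ≤ C * ψ 1 := (hcomp 1 (H α) one_pos (by simp [hH α hα, hQ α hα hyα])).1
  have hα' := abs_sub_le_iff.mp (hyα.trans hψα)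
  exact ⟨⟨hα, hQ α hα hyα⟩, by linarith, by linarith⟩

lemma HeightSeparated.exists_volume_thickening_heightBlock_inter_Icc_le
    (hsep : HeightSeparated Z H) {b : ℝ} (hb : 0 < b) {R : ℝ} (hR : 0 ≤ R) (n : ℕ) :
    ∃ D, ∀ (k : ℕ) (a ρ : ℝ), 0 ≤ ρ → ρ ≤ R →
      volume (thickening ρ (heightBlock Z H a (b * 2 ^ k)) ∩ Icc (-n : ℝ) n) ≤
        ENNReal.ofReal (D * (2 ^ k * ρ)) := by
  obtain ⟨δ, hδ, hsep⟩ := hsep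
  refine ⟨2 * ((2 * n + 2 * R) / (δ / b) + 1), fun k a ρ hρ hρR ↦ ?_⟩
  have hpow : (1 : ℝ) ≤ 2 ^ k := one_le_pow₀ one_le_two
  have hsub : heightBlock Z H a (b * 2 ^ k) ⊆ {α ∈ Z | H α ≤ b * 2 ^ k} :=
    fun α hα ↦ ⟨hα.1, hα.2.2⟩
  rw [← ofReal_measureReal (measure_inter_lt_top_of_right_ne_top measure_Icc_lt_top.ne).ne]
  refine ENNReal.ofReal_le_ofReal ?_
  calc _ ≤ ((n - -n + 2 * ρ) / (δ / (b * 2 ^ k)) + 1) * (2 * ρ) :=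
        volume_real_thickening_inter_Icc_le (by positivity)
          ((pairwise_le_dist_of_height_le (by positivity) hsep).mono hsub) hρ (by linarith)
    _ ≤ ((2 * n + 2 * R) / (δ / (b * 2 ^ k)) + 2 ^ k) * (2 * ρ) := by
        gcongr
        linarith
    _ = _ := by field_simp

/-- The convergence half of **Khintchine's theorem** for a set of reals with a height. -/
theorem volume_setOf_infinite_abs_sub_le_eq_zero (hsep : HeightSeparated Z H) {h : ℝ}
    (hh : 0 < h) (hH : ∀ α ∈ Z, h ≤ H α) (hψ : IsORegular ψ)
    (hsum : Summable fun k : ℕ ↦ 2 ^ k * ψ (2 ^ k)) :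
    volume {y | {α | α ∈ Z ∧ |y - α| ≤ ψ (H α)}.Infinite} = 0 := by
  obtain ⟨C, hC, hcomp⟩ := hψ.exists_comparable hh (2 * h)
  have hψ0 : ∀ k : ℕ, 0 < ψ (2 ^ k) := fun k ↦ hψ.pos _ (by positivity)
  set ρ : ℕ → ℝ := fun k ↦ 2 * (C * ψ (2 ^ k)) with hρ
  have hsumρ : Summable fun k : ℕ ↦ 2 ^ k * ρ k :=
    (hsum.mul_left (2 * C)).congr fun k ↦ by simp only [hρ]; ring
  have hρ0 : ∀ k, 0 ≤ ρ k := fun k ↦ by have := hψ0 k; positivity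
  have hρR : ∀ k, ρ k ≤ ∑' k, 2 ^ k * ρ k := fun k ↦
    (le_mul_of_one_le_left (hρ0 k) (one_le_pow₀ one_le_two)).trans
      (hsumρ.le_tsum k fun j _ ↦ mul_nonneg (by positivity) (hρ0 j))
  set E : ℕ → ℕ → Set ℝ := fun n k ↦
    thickening (ρ k) (heightBlock Z H (h * 2 ^ k) (2 * h * 2 ^ k)) ∩ Icc (-n : ℝ) n
  have hE : ∀ n, volume (limsup (E n) atTop) = 0 := fun n ↦ by
    obtain ⟨D, hD⟩ := hsep.exists_volume_thickening_heightBlock_inter_Icc_le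
      (by positivity : 0 < 2 * h) ((hρ0 0).trans (hρR 0)) n
    exact measure_limsup_atTop_eq_zero ((ENNReal.tsum_le_tsum fun k ↦
      hD k _ _ (hρ0 k) (hρR k)).trans_lt (hsumρ.mul_left D).tsum_ofReal_lt_top).ne
  refine measure_mono_null (fun y hy ↦ ?_) (measure_iUnion_null hE)
  obtain ⟨n, hn⟩ := exists_nat_ge |y|
  refine mem_iUnion.mpr ⟨n, mem_limsup_iff_frequently_mem.mpr (frequently_atTop.mpr fun p ↦ ?_)⟩
  obtain ⟨α, hα, hyα, hpα⟩ := hsep.exists_lt_height_of_infinite hh hH hψ hy (h * 2 ^ p)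
  obtain ⟨k, hαk⟩ := exists_nat_mem_heightBlock_of_le_height hh hα (hH α hα)
  have hpk : p ≤ k := by
    have hlt : (2 : ℝ) ^ p < 2 ^ (k + 1) := by
      rw [pow_succ']
      exact lt_of_mul_lt_mul_left (by linarith [hαk.2.2]) hh.le
    exact Nat.lt_succ_iff.mp ((pow_lt_pow_iff_right₀ one_lt_two).mp hlt)
  refine ⟨k, hpk, mem_thickening_iff.mpr ⟨α, hαk, ?_⟩, abs_le.mp hn⟩
  rw [Real.dist_eq]
  linarith [hyα.trans (hcomp _ _ (by positivity) hαk.2).1, mul_pos hC (hψ0 k)]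

/-- The divergence half of **Khintchine's theorem** for a set of reals with a height. -/
theorem volume_compl_setOf_infinite_abs_sub_le_eq_zero (hsep : HeightSeparated Z H)
    (hdense : HeightDense Z H) (hψ : IsORegular ψ)
    (hsum : ¬ Summable fun k : ℕ ↦ 2 ^ k * ψ (2 ^ k)) :
    volume {y | {α | α ∈ Z ∧ |y - α| ≤ ψ (H α)}.Infinite}ᶜ = 0 := by
  obtain ⟨δ, hδ, m, hm, hfull⟩ :=
    exists_volume_compl_limsup_thickening_heightBlock_eq_zero hsep hdense
  obtain ⟨C, hC, hcomp⟩ := hψ.exists_comparable hm 1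
  have hψ0 : ∀ k : ℕ, 0 < ψ (2 ^ k) := fun k ↦ hψ.pos _ (by positivity)
  set a : ℕ → ℝ := fun k ↦ min (1 / 2) (2 ^ k * ψ (2 ^ k) / (C * δ))
  have haψ : ∀ k, a k * (δ / 2 ^ k) ≤ ψ (2 ^ k) / C := fun k ↦ by
    calc a k * (δ / 2 ^ k) ≤ 2 ^ k * ψ (2 ^ k) / (C * δ) * (δ / 2 ^ k) := by
          gcongr
          exact min_le_right _ _
      _ = ψ (2 ^ k) / C := by field_simp
  have hnull := hfull a
    (fun k ↦ le_min (by norm_num) (div_nonneg (by have := hψ0 k; positivity) (by positivity)))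
    (fun k ↦ by linarith [min_le_left (1 / 2) (2 ^ k * ψ (2 ^ k) / (C * δ))])
    fun h ↦ hsum ((summable_div_const_iff (mul_pos hC hδ).ne').mp
      (summable_of_summable_min one_half_pos h))
  refine measure_mono_null (compl_subset_compl.mpr fun y hy hfin ↦ ?_) hnull
  obtain ⟨b, hb⟩ := (hfin.image H).bddAbove
  have hlarge : ∀ᶠ k : ℕ in atTop, b < m * 2 ^ k :=
    ((tendsto_pow_atTop_atTop_of_one_lt one_lt_two).const_mul_atTop hm).eventually_gt_atTop b
  obtain ⟨k, hyk, hbk⟩ := ((mem_limsup_iff_frequently_mem.mp hy).and_eventually hlarge).exists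
  obtain ⟨α, hαk, hyα⟩ := mem_thickening_iff.mp hyk
  have hψα : ψ (2 ^ k) ≤ C * ψ (H α) :=
    (hcomp _ _ (by positivity) ⟨hαk.2.1, by simpa using hαk.2.2⟩).2
  have hmem : α ∈ {α | α ∈ Z ∧ |y - α| ≤ ψ (H α)} :=
    ⟨hαk.1, (hyα.le.trans (haψ k)).trans ((div_le_iff₀' hC).mpr hψα)⟩
  exact (hbk.trans_le hαk.2.1).not_ge (hb (mem_image_of_mem H hmem))

end Khintchine

theorem khintchine_goldenRatio_general {α₀ : ℝ} (hα₀ : IsQuadIrr α₀) {ψ : ℝ → ℝ}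
    (hψ : IsORegular ψ) :
    (∫⁻ t in Ioi 1, ENNReal.ofReal (ψ t) = ⊤ →
      volume ({y | Irrational y ∧ y ∉ mobOrbit α₀} \ WAset (mobOrbit α₀) ψ) = 0) ∧
    (∫⁻ t in Ioi 1, ENNReal.ofReal (ψ t) < ⊤ → volume (WAset (mobOrbit α₀) ψ) = 0) := by
  obtain ⟨σ, hσ⟩ := hα₀.exists_isGalConj
  obtain ⟨ε, hε, hle⟩ := hσ.exists_pos_le_qiHeight_mob
  refine ⟨fun htop ↦ ?_, fun hlt ↦ ?_⟩
  · have hsum := mt hψ.lintegral_Ioi_one_lt_top_iff.mpr htop.not_lt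
    refine measure_mono_null ?_ (volume_compl_setOf_infinite_abs_sub_le_eq_zero
      hσ.heightSeparated_mobOrbit hσ.heightDense_mobOrbit hψ hsum)
    exact fun y ⟨⟨hirr, hy⟩, hyWA⟩ hinf ↦ hyWA ⟨hirr, hy, hinf⟩
  · refine measure_mono_null (fun y hy ↦ hy.2.2) (volume_setOf_infinite_abs_sub_le_eq_zero
      hσ.heightSeparated_mobOrbit hε ?_ hψ (hψ.lintegral_Ioi_one_lt_top_iff.mp hlt))
    rintro _ ⟨A, rfl⟩
    exact hle A

/-- Parkkonen-Paulin (Khintchine-type theorem for approximation by the orbit of the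
Golden Ratio): let `ψ : (0,+∞) → (0,+∞)` be such that `t ↦ ln ψ(eᵗ)` is Lipschitz. If
`∫₁^∞ ψ(t) dt = +∞` then Lebesgue-almost every `y ∈ ℝ ∖ (ℚ ∪ PSL₂(ℤ)·φ)` is
`ψ`-well approximable, and if `∫₁^∞ ψ(t) dt < +∞` then `WA_ψ` has Lebesgue measure
zero. -/
theorem khintchine_goldenRatio (ψ : ℝ → ℝ) (hψpos : ∀ t, 0 < t → 0 < ψ t)
    (hLip : ∃ L : NNReal, LipschitzWith L fun t : ℝ => Real.log (ψ (Real.exp t))) :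
    ((∫⁻ t in Set.Ioi (1 : ℝ), ENNReal.ofReal (ψ t)) = ⊤ →
      MeasureTheory.volume
        ({y : ℝ | Irrational y ∧ y ∉ mobOrbit goldenRat} \
          WAset (mobOrbit goldenRat) ψ) = 0) ∧
    ((∫⁻ t in Set.Ioi (1 : ℝ), ENNReal.ofReal (ψ t)) < ⊤ →
      MeasureTheory.volume (WAset (mobOrbit goldenRat) ψ) = 0) :=
  khintchine_goldenRatio_general isQuadIrr_goldenRat (isORegular_of_lipschitzWith_log hψpos hLip)
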